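/- arXiv:2008.11144 — 2 statements merged into one kernel-verified Lean document; each statement's English description precedes it below -/
import Mathlib

section
/- Let M > 1, R > 0, c > 0, and let Ω_i ⊆ B_R be a sequence of M-uniform domains with diam(Ω_i) ≥ c and χ_{Ω_i} → χ_Ω in L¹ for some limit set Ω (normalized so 0 < |Ω ∩ B_r(x)| < ω_n rⁿ for all x ∈ ∂Ω, r > 0). Then the interior of Ω is nonempty, and int(Ω) is an M-uniform domain with |Ω \ int(Ω)| = 0; hence χ_{Ω_i} → χ_{int(Ω)} in L¹. -/
open MeasureTheory Metric Set Filter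

/-- A connected open set `Ω` is `M`-uniform if any two points of its closure can be joined
by a rectifiable curve in the closure of length at most `M` times their distance, which
stays at distance from the boundary at least `1/M` times the minimum of the distances to
the two endpoints. -/
def IsMUniform {n : ℕ} (M : ℝ) (Ω : Set (EuclideanSpace ℝ (Fin n))) : Prop :=
  IsOpen Ω ∧ IsConnected Ω ∧
  ∀ x₁ ∈ closure Ω, ∀ x₂ ∈ closure Ω, ∃ γ : ℝ → EuclideanSpace ℝ (Fin n),
    ContinuousOn γ (Set.Icc 0 1) ∧ γ 0 = x₁ ∧ γ 1 = x₂ ∧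
    (∀ t ∈ Set.Icc (0:ℝ) 1, γ t ∈ closure Ω) ∧
    eVariationOn γ (Set.Icc 0 1) ≤ ENNReal.ofReal (M * dist x₁ x₂) ∧
    (∀ t ∈ Set.Icc (0:ℝ) 1,
      Metric.infDist (γ t) (frontier Ω) ≥ (1 / M) * min (dist (γ t) x₁) (dist (γ t) x₂))


open scoped Topology ENNReal

lemma aux_cont_var {E : Type*} [MetricSpace E] (f : ℝ → E) (hf : ContinuousOn f (Icc 0 1))
    (hv : BoundedVariationOn f (Icc (0:ℝ) 1)) :
    ContinuousOn (variationOnFromTo f (Icc (0:ℝ) 1) 0) (Icc 0 1) := by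
  intro x hx
  have h0 : (0:ℝ) ∈ Icc (0:ℝ) 1 := by simp
  have h1 := hv.tendsto_eVariationOn_Icc_zero_left (x := x)
    ((hf x hx).mono inter_subset_left)
  have h2 := hv.tendsto_eVariationOn_Icc_zero_right x
    ((hf x hx).mono inter_subset_left)
  have h3 := ((ENNReal.tendsto_toReal (by simp)).comp h1).add
    ((ENNReal.tendsto_toReal (by simp)).comp h2)
  simp only [ENNReal.toReal_zero, add_zero] at h3
  rw [ContinuousWithinAt, tendsto_iff_dist_tendsto_zero]
  refine squeeze_zero' (Eventually.of_forall fun _ => dist_nonneg) ?_ h3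
  filter_upwards [self_mem_nhdsWithin] with y hy
  have hadd := variationOnFromTo.add hv.locallyBoundedVariationOn h0 hx hy
  have : variationOnFromTo f (Icc (0:ℝ) 1) 0 y - variationOnFromTo f (Icc (0:ℝ) 1) 0 x =
    variationOnFromTo f (Icc (0:ℝ) 1) x y := by linarith
  rw [Real.dist_eq, this, variationOnFromTo]
  have a1 : 0 ≤ (eVariationOn f (Icc (0:ℝ) 1 ∩ Icc y x)).toReal := ENNReal.toReal_nonneg
  have a2 : 0 ≤ (eVariationOn f (Icc (0:ℝ) 1 ∩ Icc x y)).toReal := ENNReal.toReal_nonneg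
  simp only [Function.comp]
  split_ifs
  · rw [abs_of_nonneg a2]; linarith
  · rw [abs_neg, abs_of_nonneg a1]; linarith

lemma aux_reparam {E : Type*} [MetricSpace E] (f : ℝ → E) (hf : ContinuousOn f (Icc 0 1))
    (L : ℝ) (hL : 0 ≤ L) (hv : eVariationOn f (Icc (0:ℝ) 1) ≤ ENNReal.ofReal L) :
    ∃ g : ℝ → E, g 0 = f 0 ∧ g 1 = f 1 ∧
      (∀ u ∈ Icc (0:ℝ) 1, ∃ t ∈ Icc (0:ℝ) 1, g u = f t) ∧
      (∀ u ∈ Icc (0:ℝ) 1, ∀ v ∈ Icc (0:ℝ) 1, dist (g u) (g v) ≤ L * |u - v|) := by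
  have hb : BoundedVariationOn f (Icc (0:ℝ) 1) := ne_top_of_le_ne_top (by simp) hv
  have hl := hb.locallyBoundedVariationOn
  have h0 : (0:ℝ) ∈ Icc (0:ℝ) 1 := by simp
  have h1 : (1:ℝ) ∈ Icc (0:ℝ) 1 := by simp
  set V := variationOnFromTo f (Icc (0:ℝ) 1) 0 with hV
  have hc : ContinuousOn V (Icc 0 1) := aux_cont_var f hf hb
  have hV0 : V 0 = 0 := variationOnFromTo.self _ _ _
  have hV1 : V 1 ≤ L := by
    rw [hV, variationOnFromTo.eq_of_le _ _ zero_le_one, inter_self]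
    exact ENNReal.toReal_le_of_le_ofReal hL hv
  have hV1' : 0 ≤ V 1 := variationOnFromTo.nonneg_of_le _ _ zero_le_one
  have hd : ∀ a ∈ Icc (0:ℝ) 1, ∀ b ∈ Icc (0:ℝ) 1, dist (f a) (f b) ≤ |V a - V b| := by
    have key : ∀ a ∈ Icc (0:ℝ) 1, ∀ b ∈ Icc (0:ℝ) 1, a ≤ b → dist (f a) (f b) ≤ |V a - V b| := by
      intro a ha b hb' hab
      have hadd := variationOnFromTo.add hl h0 ha hb'
      have : variationOnFromTo f (Icc (0:ℝ) 1) a b = V b - V a := by rw [hV]; linarith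
      have h3 := variationOnFromTo.edist_zero_of_eq_zero hl ha hb'
      rw [variationOnFromTo.eq_of_le _ _ hab] at this
      have h4 : BoundedVariationOn f (Icc (0:ℝ) 1 ∩ Icc a b) := hb.mono inter_subset_left
      have h5 := h4.dist_le (x := a) (y := b) ⟨ha, le_rfl, hab⟩ ⟨hb', hab, le_rfl⟩
      rw [this] at h5
      rw [abs_sub_comm]
      exact h5.trans (le_abs_self _)
    intro a ha b hb'
    rcases le_total a b with h | h
    · exact key a ha b hb' h
    · rw [dist_comm, abs_sub_comm]; exact key b hb' a ha h
  have hs : ∀ u : ℝ, ∃ t, u ∈ Icc (0:ℝ) 1 → t ∈ Icc (0:ℝ) 1 ∧ V t = u * V 1 := by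
    intro u
    by_cases hu : u ∈ Icc (0:ℝ) 1
    · have := intermediate_value_Icc (zero_le_one (α := ℝ)) hc
      obtain ⟨t, ht, hte⟩ := this (show u * V 1 ∈ Icc (V 0) (V 1) by
        rw [hV0]; exact ⟨mul_nonneg hu.1 hV1', mul_le_of_le_one_left hV1' hu.2⟩)
      exact ⟨t, fun _ => ⟨ht, hte⟩⟩
    · exact ⟨0, fun h => absurd h hu⟩
  choose τ hτ using hs
  refine ⟨fun u => f (τ u), ?_, ?_, fun u hu => ⟨τ u, (hτ u hu).1, rfl⟩, ?_⟩
  · have := hd _ (hτ 0 h0).1 0 h0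
    rw [(hτ 0 h0).2, hV0] at this
    simpa using this
  · have := hd _ (hτ 1 h1).1 1 h1
    rw [(hτ 1 h1).2] at this
    simpa using this
  · intro u hu v hv'
    have := hd _ (hτ u hu).1 _ (hτ v hv').1
    rw [(hτ u hu).2, (hτ v hv').2, ← sub_mul, abs_mul, abs_of_nonneg hV1'] at this
    rw [mul_comm]
    exact this.trans (mul_le_mul_of_nonneg_left hV1 (abs_nonneg _))

lemma aux_subset {X : Type*} [TopologicalSpace X] {s t : Set X} (hs : IsPreconnected s)
    (hd : ∀ x ∈ s, x ∉ frontier t) (hn : (s ∩ interior t).Nonempty) : s ⊆ interior t := by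
  refine hs.subset_left_of_subset_union isOpen_interior (isOpen_interior (s := tᶜ)) ?_ ?_ hn
  · exact (disjoint_compl_right (a := t)).mono interior_subset interior_subset
  · intro x hx
    by_contra h
    have := hd x hx
    rw [frontier_eq_closure_inter_closure] at this
    simp only [mem_union, not_or, interior_compl, mem_compl_iff, not_not] at h
    apply this
    refine ⟨h.2, ?_⟩
    rw [closure_compl]; exact h.1

/-- corkscrew condition -/
lemma aux_cork {n : ℕ} {M c : ℝ} (hM : 1 < M) (hc : 0 < c)
    {Ω : Set (EuclideanSpace ℝ (Fin n))} (hu : IsMUniform M Ω) (hd : c ≤ Metric.diam Ω)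
    (x : EuclideanSpace ℝ (Fin n)) (hx : x ∈ closure Ω) (r : ℝ) (hr : 0 < r) (hrc : r ≤ c / 8) :
    ∃ y ∈ closure Ω, dist y x = r ∧ ball y (r / M) ⊆ Ω := by
  obtain ⟨hO, hC, hcurve⟩ := hu
  have hz : ∃ z ∈ Ω, c / 4 < dist x z := by
    by_contra! h
    have : Metric.diam Ω ≤ c / 2 := by
      refine Metric.diam_le_of_forall_dist_le (by linarith) fun a ha b hb => ?_
      have h1 := h a ha
      have h2 := h b hb
      have := dist_triangle_left a b x
      linarith
    linarith
  obtain ⟨z, hz, hxz⟩ := hz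
  obtain ⟨γ, hγc, h0, h1, hcl, -, hin⟩ := hcurve x hx z (subset_closure hz)
  have hcont : ContinuousOn (fun t => dist (γ t) x) (Icc 0 1) :=
    fun t ht => Filter.Tendsto.dist (hγc t ht) tendsto_const_nhds
  obtain ⟨t, ht, hte⟩ := intermediate_value_Icc (zero_le_one (α := ℝ)) hcont
    (show r ∈ Icc (dist (γ 0) x) (dist (γ 1) x) by
      rw [h0, h1, dist_self, dist_comm]; constructor <;> linarith)
  simp only at hte
  refine ⟨γ t, hcl t ht, hte, ?_⟩
  have h2 := hin t ht
  have h3 : r ≤ dist (γ t) z := by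
    have := dist_triangle_left x z (γ t)
    linarith
  have h4 : r / M ≤ infDist (γ t) (frontier Ω) := by
    rw [hte, min_eq_left h3] at h2
    rw [div_eq_inv_mul, ← one_div]; exact h2
  have hpos : 0 < r / M := by positivity
  have hnf : ∀ p ∈ ball (γ t) (r / M), p ∉ frontier Ω := by
    intro p hp hpf
    have := infDist_le_dist_of_mem (x := γ t) hpf
    rw [mem_ball, dist_comm] at hp
    linarith
  have hmem : γ t ∈ interior Ω := by
    by_contra h
    exact hnf _ (mem_ball_self hpos) ⟨hcl t ht, h⟩
  exact (aux_subset (convex_ball _ _).isPreconnected hnf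
    ⟨γ t, mem_ball_self hpos, hmem⟩).trans interior_subset

theorem limit_of_MUniform_domains (n : ℕ) (M R c : ℝ) (hM : 1 < M) (hR : 0 < R)
    (hc : 0 < c)
    (Ωi : ℕ → Set (EuclideanSpace ℝ (Fin n))) (Ω : Set (EuclideanSpace ℝ (Fin n)))
    (hsub : ∀ i, Ωi i ⊆ Metric.ball 0 R)
    (huni : ∀ i, IsMUniform M (Ωi i))
    (hdiam : ∀ i, c ≤ Metric.diam (Ωi i))
    (hmeasΩ : MeasurableSet Ω)
    (hconv : Tendsto (fun i => volume (symmDiff (Ωi i) Ω)) atTop (nhds 0))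
    (hnorm : ∀ x ∈ frontier Ω, ∀ r : ℝ, 0 < r →
      0 < volume (Ω ∩ Metric.ball x r) ∧
      volume (Ω ∩ Metric.ball x r) <
        ENNReal.ofReal
          ((volume (Metric.ball (0 : EuclideanSpace ℝ (Fin n)) 1)).toReal * r ^ n)) :
    (interior Ω).Nonempty ∧ IsMUniform M (interior Ω) ∧
    volume (Ω \ interior Ω) = 0 ∧
    Tendsto (fun i => volume (symmDiff (Ωi i) (interior Ω))) atTop (nhds 0) := by
  set l : Ultrafilter ℕ := hyperfilter ℕ with hldef
  have hl : (l : Filter ℕ) ≤ atTop := Nat.hyperfilter_le_atTop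
  have hM0 : 0 < M := by linarith
  have hconvl : Tendsto (fun i => volume (symmDiff (Ωi i) Ω)) l (nhds 0) := hconv.mono_left hl
  have lim : ∀ p : ℕ → EuclideanSpace ℝ (Fin n), (∀ i, p i ∈ closedBall 0 R) →
      ∃ q, Tendsto p l (nhds q) := by
    intro p hp
    obtain ⟨q, -, hq⟩ := (isCompact_closedBall (0 : EuclideanSpace ℝ (Fin n)) R).ultrafilter_le_nhds'
      (l.map p) (Ultrafilter.mem_map.2 (Filter.univ_mem' hp))
    exact ⟨q, hq⟩
  have clB : ∀ i, closure (Ωi i) ⊆ closedBall 0 R := fun i =>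
    closure_minimal ((hsub i).trans ball_subset_closedBall) isClosed_closedBall
  have hNT : Nontrivial (EuclideanSpace ℝ (Fin n)) := by
    by_contra h
    rw [not_nontrivial_iff_subsingleton] at h
    have := Metric.diam_subsingleton (s := Ωi 0) (Set.subsingleton_of_subsingleton)
    linarith [hdiam 0]
  have volball : ∀ (x : EuclideanSpace ℝ (Fin n)) (r : ℝ), 0 < r → volume (ball x r) =
      ENNReal.ofReal ((volume (Metric.ball (0 : EuclideanSpace ℝ (Fin n)) 1)).toReal * r ^ n) := by
    intro x r hr
    rw [Measure.addHaar_ball volume x hr.le, ENNReal.ofReal_mul ENNReal.toReal_nonneg,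
      ENNReal.ofReal_toReal measure_ball_lt_top.ne, mul_comm, finrank_euclideanSpace_fin]
  have A1 : ∀ s : Set (EuclideanSpace ℝ (Fin n)), (∃ᶠ i in (l : Filter ℕ), s ⊆ Ωi i) →
      volume (s \ Ω) = 0 := by
    intro s hs
    by_contra h
    have h1 := hconvl.eventually_lt_const (pos_iff_ne_zero.2 h)
    obtain ⟨i, hi1, hi2⟩ := (hs.and_eventually h1).exists
    refine absurd hi2 (not_lt.2 (measure_mono ?_))
    exact fun x hx => Or.inl ⟨hi1 hx.1, hx.2⟩
  have A2 : ∀ s : Set (EuclideanSpace ℝ (Fin n)), (∃ᶠ i in (l : Filter ℕ), Disjoint s (Ωi i)) →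
      volume (Ω ∩ s) = 0 := by
    intro s hs
    by_contra h
    have h1 := hconvl.eventually_lt_const (pos_iff_ne_zero.2 h)
    obtain ⟨i, hi1, hi2⟩ := (hs.and_eventually h1).exists
    refine absurd hi2 (not_lt.2 (measure_mono ?_))
    exact fun x hx => Or.inr ⟨hx.1, disjoint_left.1 hi1 hx.2⟩
  have F0 : ∀ x ∈ frontier Ω, ∀ r : ℝ, 0 < r → volume (ball x r \ Ω) ≠ 0 := by
    intro x hx r hr h0
    have h1 := (hnorm x hx r hr).2
    rw [← volball x r hr] at h1
    refine absurd h1 (not_lt.2 ?_)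
    calc volume (ball x r) ≤ volume (ball x r ∩ Ω) + volume (ball x r \ Ω) :=
          measure_le_inter_add_sdiff _ _ _
      _ = volume (Ω ∩ ball x r) := by rw [h0, add_zero, inter_comm]
  have Bball : ∀ y (r : ℝ), 0 < r → volume (ball y r \ Ω) = 0 → ball y r ⊆ interior Ω := by
    intro y r hr h0
    have hnf : ∀ p ∈ ball y r, p ∉ frontier Ω := by
      intro p hp hpf
      rw [mem_ball] at hp
      refine F0 p hpf (r - dist p y) (by linarith) (measure_mono_null ?_ h0)
      exact sdiff_subset_sdiff_left (ball_subset_ball' (by linarith))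
    refine aux_subset (convex_ball _ _).isPreconnected hnf ?_
    by_contra hne
    have hdis : ∀ p ∈ ball y r, p ∉ Ω := by
      intro p hp hpO
      refine hnf p hp ⟨subset_closure hpO, fun hpi => hne ⟨p, hp, hpi⟩⟩
    have : ball y r \ Ω = ball y r := by
      ext p; exact ⟨fun h => h.1, fun h => ⟨h, hdis p h⟩⟩
    rw [this] at h0
    exact (measure_ball_pos volume y hr).ne' h0
  have C : ∀ (p : ℕ → EuclideanSpace ℝ (Fin n)) x, (∀ i, p i ∈ closure (Ωi i)) →
      Tendsto p l (nhds x) → ∀ r, 0 < r → r ≤ c / 8 →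
      ∃ y, dist y x = r ∧ ball y (r / (2 * M)) ⊆ interior Ω := by
    intro p x hp hpx r hr hrc
    choose q hq1 hq2 hq3 using fun i => aux_cork hM hc (huni i) (hdiam i) (p i) (hp i) r hr hrc
    obtain ⟨y, hy⟩ := lim q (fun i => clB i (hq1 i))
    have hrM : 0 < r / (2 * M) := by positivity
    refine ⟨y, ?_, Bball y _ hrM (A1 _ ?_)⟩
    · refine tendsto_nhds_unique (hy.dist hpx) ?_
      simp only [hq2]
      exact tendsto_const_nhds
    · have : ∀ᶠ i in (l : Filter ℕ), ball y (r / (2 * M)) ⊆ Ωi i := by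
        filter_upwards [hy.eventually (ball_mem_nhds y hrM)] with i hi
        refine (ball_subset_ball' ?_).trans (hq3 i)
        rw [dist_comm] at hi
        have : r / M = r / (2 * M) + r / (2 * M) := by field_simp; norm_num
        linarith
      exact this.frequently
  have C' : ∀ (p : ℕ → EuclideanSpace ℝ (Fin n)) x, (∀ i, p i ∈ closure (Ωi i)) →
      Tendsto p l (nhds x) → x ∈ closure (interior Ω) := by
    intro p x hp hpx
    rw [Metric.mem_closure_iff]
    intro ε hε
    have hm : 0 < min (ε / 2) (c / 8) := by positivity
    obtain ⟨y, hy1, hy2⟩ := C p x hp hpx (min (ε / 2) (c / 8)) hm (min_le_right _ _)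
    refine ⟨y, hy2 (mem_ball_self (by positivity)), ?_⟩
    rw [dist_comm, hy1]
    have := min_le_left (ε / 2) (c / 8)
    linarith
  have D : ∀ x ∈ closure Ω, ∀ r : ℝ, 0 < r → volume (Ω ∩ ball x r) ≠ 0 := by
    intro x hx r hr
    by_cases hxi : x ∈ interior Ω
    · have : 0 < volume (interior Ω ∩ ball x r) :=
        (isOpen_interior.inter isOpen_ball).measure_pos _ ⟨x, hxi, mem_ball_self hr⟩
      exact (this.trans_le (measure_mono (inter_subset_inter_left _ interior_subset))).ne'
    · exact (hnorm x ⟨hx, hxi⟩ r hr).1.ne'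
  have D' : ∀ x ∈ closure Ω, ∀ r : ℝ, 0 < r →
      ∀ᶠ i in (l : Filter ℕ), (ball x r ∩ Ωi i).Nonempty := by
    intro x hx r hr
    by_contra h
    rw [not_eventually] at h
    refine D x hx r hr (A2 _ (h.mono fun i hi => ?_))
    rwa [disjoint_iff_inter_eq_empty, ← not_nonempty_iff_eq_empty]
  have seq : ∀ x ∈ closure Ω, ∃ p : ℕ → EuclideanSpace ℝ (Fin n),
      (∀ i, p i ∈ closure (Ωi i)) ∧ Tendsto p l (nhds x) := by
    intro x hx
    choose p hp1 hp2 using fun i =>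
      exists_mem_closure_infDist_eq_dist (huni i).2.1.nonempty x
    refine ⟨p, hp1, ?_⟩
    rw [Metric.tendsto_nhds]
    intro ε hε
    filter_upwards [D' x hx ε hε] with i ⟨z, hz1, hz2⟩
    rw [dist_comm, ← hp2 i]
    rw [mem_ball, dist_comm] at hz1
    exact (infDist_le_dist_of_mem hz2).trans_lt hz1
  have F : ∀ x ∈ frontier Ω, ∀ r : ℝ, 0 < r →
      ∀ᶠ i in (l : Filter ℕ), ∃ z ∈ frontier (Ωi i), dist z x < r := by
    intro x hx r hr
    have h2 : ∀ᶠ i in (l : Filter ℕ), ¬ ball x r ⊆ Ωi i := by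
      rw [← not_frequently]
      exact fun h => F0 x hx r hr (A1 _ h)
    filter_upwards [D' x hx.1 r hr, h2] with i hi1 hi2
    by_contra! hno
    apply hi2
    have hio := (huni i).1.interior_eq
    rw [← hio]
    refine aux_subset (convex_ball x r).isPreconnected ?_ (by rwa [hio])
    intro p hp hpf
    exact absurd (mem_ball.1 hp) (not_lt.2 (hno p hpf))
  have hclos : closure Ω ⊆ closure (interior Ω) := by
    intro x hx
    obtain ⟨p, hp1, hp2⟩ := seq x hx
    exact C' p x hp1 hp2
  have hne : (interior Ω).Nonempty := by
    choose p hp using fun i => (huni i).2.1.nonempty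
    obtain ⟨q, hq⟩ := lim p (fun i => clB i (subset_closure (hp i)))
    have := C' p q (fun i => subset_closure (hp i)) hq
    exact closure_nonempty_iff.1 ⟨q, this⟩
  have hnull : volume (frontier Ω) = 0 := by
    have hae := Besicovitch.ae_tendsto_measure_inter_div (volume) (frontier Ω)
    rw [← Measure.restrict_eq_zero, ← ae_eq_bot, ← empty_mem_iff_bot]
    filter_upwards [hae, ae_restrict_mem isClosed_frontier.measurableSet] with x hx hxf
    obtain ⟨p, hp1, hp2⟩ := seq x hxf.1
    set δ : ENNReal := ENNReal.ofReal ((1 / (4 * M)) ^ n) with hδ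
    have hδ0 : δ ≠ 0 := by
      rw [hδ]; simp only [ne_eq, ENNReal.ofReal_eq_zero, not_le]; positivity
    have hlt : (1 : ENNReal) - δ < 1 := ENNReal.sub_lt_self (by simp) (by simp) hδ0
    have hev := hx.eventually_const_lt hlt
    have hr8 : ∀ᶠ r in nhdsWithin (0:ℝ) (Ioi 0), r ∈ Ioo 0 (c / 8) :=
      Ioo_mem_nhdsGT (by positivity)
    obtain ⟨r, hr1, hr0, hrc⟩ := (hev.and hr8).exists
    obtain ⟨y, hy1, hy2⟩ := C p x hp1 hp2 (r / 2) (by positivity) (by linarith)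
    refine absurd hr1 (not_lt.2 ?_)
    have hrM : 0 < r / 2 / (2 * M) := by positivity
    have hsubs : ball y (r / 2 / (2 * M)) ⊆ closedBall x r := by
      refine (ball_subset_ball' ?_).trans ball_subset_closedBall
      rw [hy1]
      have : r / 2 / (2 * M) ≤ r / 2 := div_le_self (by positivity) (by linarith)
      linarith
    have hdj : Disjoint (frontier Ω ∩ closedBall x r) (ball y (r / 2 / (2 * M))) := by
      rw [disjoint_left]
      intro z hz hz2
      exact hz.1.2 (hy2 hz2)
    have hsum : volume (frontier Ω ∩ closedBall x r) + volume (ball y (r / 2 / (2 * M))) ≤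
        volume (closedBall x r) := by
      rw [← measure_union hdj measurableSet_ball]
      exact measure_mono (union_subset inter_subset_right hsubs)
    have hvb : volume (ball y (r / 2 / (2 * M))) = δ * volume (closedBall x r) := by
      rw [Measure.addHaar_closedBall volume x hr0.le, Measure.addHaar_ball volume y hrM.le,
        ← mul_assoc, hδ, ← ENNReal.ofReal_mul (by positivity), finrank_euclideanSpace_fin, ← mul_pow]
      congr 3
      field_simp
      norm_num
    have hvt : volume (closedBall x r) ≠ ⊤ := measure_closedBall_lt_top.ne
    have hv0 : volume (closedBall x r) ≠ 0 := (measure_closedBall_pos volume x hr0).ne'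
    rw [ENNReal.div_le_iff hv0 hvt, ENNReal.sub_mul (fun _ _ => hvt), one_mul, ← hvb]
    exact ENNReal.le_sub_of_add_le_right measure_ball_lt_top.ne hsum
  have hnull' : volume (Ω \ interior Ω) = 0 :=
    measure_mono_null
      (show Ω \ interior Ω ⊆ frontier Ω from fun x hx => ⟨subset_closure hx.1, hx.2⟩) hnull
  have hfin : volume (interior Ω) ≠ ⊤ := by
    have h1 := hconvl.eventually_lt_const (show (0 : ENNReal) < 1 by simp)
    obtain ⟨i, hi⟩ := h1.exists
    refine ne_top_of_le_ne_top (b := volume (ball (0 : EuclideanSpace ℝ (Fin n)) R) + 1)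
      (ENNReal.add_ne_top.2 ⟨measure_ball_lt_top.ne, by simp⟩) ?_
    calc volume (interior Ω) ≤ volume (ball 0 R ∪ symmDiff (Ωi i) Ω) := by
          refine measure_mono fun x hx => ?_
          by_cases hxi : x ∈ Ωi i
          · exact Or.inl (hsub i hxi)
          · exact Or.inr (Or.inr ⟨interior_subset hx, hxi⟩)
      _ ≤ _ := (measure_union_le _ _).trans (add_le_add le_rfl hi.le)
  have hfne : (frontier (interior Ω)).Nonempty := by
    rw [nonempty_frontier_iff]
    refine ⟨hne, fun h => hfin ?_⟩
    have : NoncompactSpace (EuclideanSpace ℝ (Fin n)) := NormedSpace.noncompactSpace ℝ _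
    rw [h]
    exact measure_univ_of_isAddLeftInvariant _
  have hcurve : ∀ x₁ ∈ closure (interior Ω), ∀ x₂ ∈ closure (interior Ω),
    ∃ γ : ℝ → EuclideanSpace ℝ (Fin n),
      ContinuousOn γ (Set.Icc 0 1) ∧ γ 0 = x₁ ∧ γ 1 = x₂ ∧
      (∀ t ∈ Set.Icc (0:ℝ) 1, γ t ∈ closure (interior Ω)) ∧
      eVariationOn γ (Set.Icc 0 1) ≤ ENNReal.ofReal (M * dist x₁ x₂) ∧
      (∀ t ∈ Set.Icc (0:ℝ) 1, Metric.infDist (γ t) (frontier (interior Ω)) ≥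
        (1 / M) * min (dist (γ t) x₁) (dist (γ t) x₂)) := by
    intro x₁ hx₁ x₂ hx₂
    obtain ⟨p, hp1, hp2⟩ := seq x₁ (closure_mono interior_subset hx₁)
    obtain ⟨q, hq1, hq2⟩ := seq x₂ (closure_mono interior_subset hx₂)
    have hg : ∀ i, ∃ g : ℝ → EuclideanSpace ℝ (Fin n), g 0 = p i ∧ g 1 = q i ∧
        (∀ u ∈ Icc (0:ℝ) 1, g u ∈ closure (Ωi i) ∧ Metric.infDist (g u) (frontier (Ωi i)) ≥
          (1 / M) * min (dist (g u) (p i)) (dist (g u) (q i))) ∧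
        (∀ u ∈ Icc (0:ℝ) 1, ∀ v ∈ Icc (0:ℝ) 1,
          dist (g u) (g v) ≤ (M * dist (p i) (q i)) * |u - v|) := by
      intro i
      obtain ⟨γ, hγc, h0, h1, hcl, hvar, hin⟩ := (huni i).2.2 (p i) (hp1 i) (q i) (hq1 i)
      obtain ⟨g, g0, g1, gr, gl⟩ := aux_reparam γ hγc _ (by positivity) hvar
      refine ⟨g, g0.trans h0, g1.trans h1, fun u hu => ?_, gl⟩
      obtain ⟨t, ht, hgt⟩ := gr u hu
      rw [hgt]
      exact ⟨hcl t ht, hin t ht⟩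
    choose g g0 g1 gin glip using hg
    have hlim : ∀ u : ℝ, ∃ y, u ∈ Icc (0:ℝ) 1 → Tendsto (fun i => g i u) l (nhds y) := by
      intro u
      by_cases hu : u ∈ Icc (0:ℝ) 1
      · obtain ⟨y, hy⟩ := lim (fun i => g i u) (fun i => clB i (gin i u hu).1)
        exact ⟨y, fun _ => hy⟩
      · exact ⟨0, fun h => absurd h hu⟩
    choose γ hγ using hlim
    have h0 : (0:ℝ) ∈ Icc (0:ℝ) 1 := by simp
    have h1 : (1:ℝ) ∈ Icc (0:ℝ) 1 := by simp
    have hlip : LipschitzOnWith (M * dist x₁ x₂).toNNReal γ (Icc 0 1) := by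
      refine LipschitzOnWith.of_dist_le_mul fun u hu v hv => ?_
      rw [Real.coe_toNNReal _ (by positivity), Real.dist_eq]
      exact le_of_tendsto_of_tendsto ((hγ u hu).dist (hγ v hv))
        (((hp2.dist hq2).const_mul M).mul_const _)
        (Eventually.of_forall fun i => glip i u hu v hv)
    refine ⟨γ, hlip.continuousOn, ?_, ?_, ?_, ?_, ?_⟩
    · refine tendsto_nhds_unique (hγ 0 h0) ?_
      simpa only [g0] using hp2
    · refine tendsto_nhds_unique (hγ 1 h1) ?_
      simpa only [g1] using hq2
    · intro t ht
      exact C' _ _ (fun i => (gin i t ht).1) (hγ t ht)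
    · have := hlip.comp_eVariationOn_le (g := id) (s := Icc (0:ℝ) 1) (mapsTo_id _)
      rw [eVariationOn_id_Icc] at this
      simpa [ENNReal.ofReal] using this
    · intro t ht
      refine (le_infDist hfne).2 fun x hx => ?_
      refine le_of_forall_pos_le_add fun ε hε => ?_
      have hev := F x (frontier_interior_subset hx) ε hε
      refine le_of_tendsto_of_tendsto
        ((((hγ t ht).dist hp2).min ((hγ t ht).dist hq2)).const_mul (1 / M))
        (((hγ t ht).dist (tendsto_const_nhds (x := x))).add_const ε) ?_
      filter_upwards [hev] with i ⟨z, hz1, hz2⟩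
      have h3 := (gin i t ht).2
      have h4 := infDist_le_dist_of_mem (x := g i t) hz1
      have h5 := dist_triangle_right (g i t) z x
      have h6 := dist_triangle (g i t) x z
      rw [dist_comm x z] at h6
      linarith
  refine ⟨hne, ⟨isOpen_interior, ⟨hne, ?_⟩, hcurve⟩, hnull', ?_⟩
  · refine isPreconnected_of_forall_pair fun x hx y hy => ?_
    obtain ⟨γ, hγc, h0, h1, hcl, -, hin⟩ := hcurve x (subset_closure hx) y (subset_closure hy)
    refine ⟨γ '' Icc 0 1, ?_, ⟨0, by simp, h0⟩, ⟨1, by simp, h1⟩, isPreconnected_Icc.image γ hγc⟩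
    rintro _ ⟨t, ht, rfl⟩
    by_contra hno
    have hfr : γ t ∈ frontier (interior Ω) := ⟨hcl t ht, by rwa [interior_interior]⟩
    have h2 := hin t ht
    rw [infDist_zero_of_mem hfr] at h2
    have hd1 : 0 < dist (γ t) x := dist_pos.2 fun h => hno (h ▸ hx)
    have hd2 : 0 < dist (γ t) y := dist_pos.2 fun h => hno (h ▸ hy)
    have : 0 < (1 / M) * min (dist (γ t) x) (dist (γ t) y) := by positivity
    linarith
  · refine tendsto_of_tendsto_of_tendsto_of_le_of_le tendsto_const_nhds hconv
      (fun _ => bot_le) fun i => ?_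
    calc volume (symmDiff (Ωi i) (interior Ω))
        ≤ volume (symmDiff (Ωi i) Ω ∪ (Ω \ interior Ω)) := by
          refine measure_mono fun x hx => ?_
          rcases hx with ⟨h1, h2⟩ | ⟨h1, h2⟩
          · by_cases hxO : x ∈ Ω
            · exact Or.inr ⟨hxO, h2⟩
            · exact Or.inl (Or.inl ⟨h1, hxO⟩)
          · exact Or.inl (Or.inr ⟨interior_subset h1, h2⟩)
      _ ≤ _ := (measure_union_le _ _).trans (by rw [hnull', add_zero])
end

section
/- (Uniform Poincaré inequality for M-uniform domains) Let M > 1, R > 0. There exists a constant C = C(M, R, n) such that for every M-uniform domain Ω ⊆ B_R and every u ∈ H¹(Ω) with ∫_Ω u dx = 0, one has ∫_Ω u² dx ≤ C ∫_Ω |∇u|² dx. -/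
open MeasureTheory Metric Set

lemma aux_sq_lint {α : Type*} [MeasurableSpace α] (μ : Measure α) (f : α → ENNReal)
    (hf : AEMeasurable f μ) : (∫⁻ x, f x ∂μ) ^ 2 ≤ μ univ * ∫⁻ x, f x ^ 2 ∂μ := by
  have h := ENNReal.lintegral_mul_le_Lp_mul_Lq μ (p := 2) (q := 2)
    (Real.HolderConjugate.two_two) (f := fun _ => 1) (g := f) aemeasurable_const hf
  simp only [Pi.mul_apply, one_mul, ENNReal.one_rpow, lintegral_const] at h
  calc (∫⁻ x, f x ∂μ) ^ 2 ≤ ((μ univ) ^ (1/2 : ℝ) * (∫⁻ x, f x ^ (2:ℝ) ∂μ) ^ (1/2:ℝ)) ^ 2 := by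
        gcongr
    _ = _ := by
        rw [mul_pow, ← ENNReal.rpow_natCast, ← ENNReal.rpow_natCast, ← ENNReal.rpow_mul,
          ← ENNReal.rpow_mul]
        norm_num

lemma aux_meas_grad {n : ℕ} (u : EuclideanSpace ℝ (Fin n) → ℝ) : Measurable (gradient u) := by
  have := measurable_fderiv ℝ u
  unfold gradient
  exact (LinearIsometryEquiv.continuous _).measurable.comp this

lemma aux_seg {n : ℕ} {u : EuclideanSpace ℝ (Fin n) → ℝ} {K : Set (EuclideanSpace ℝ (Fin n))}
    (hK : Convex ℝ K) (ho : IsOpen K) (hu : DifferentiableOn ℝ u K) {x y} (hx : x ∈ K)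
    (hy : y ∈ K) : ‖u x - u y‖ₑ ^ 2 ≤ ‖y - x‖ₑ ^ 2 *
      ∫⁻ t in Icc (0:ℝ) 1, ‖gradient u (x + t • (y - x))‖ₑ ^ 2 := by
  have hmem : ∀ t ∈ Icc (0:ℝ) 1, x + t • (y - x) ∈ K := fun t ht => hK.add_smul_sub_mem hx hy ht
  set φ' : ℝ → ℝ := fun t => fderiv ℝ u (x + t • (y - x)) (y - x) with hφ'
  have hder : ∀ t ∈ uIcc (0:ℝ) 1, HasDerivAt (fun t : ℝ => u (x + t • (y - x))) (φ' t) t := by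
    intro t ht
    rw [uIcc_of_le zero_le_one] at ht
    have h1 := ((hu _ (hmem t ht)).differentiableAt (ho.mem_nhds (hmem t ht))).hasFDerivAt
    have h2 : HasDerivAt (fun t : ℝ => x + t • (y - x)) (y - x) t := by
      simpa using ((hasDerivAt_id t).smul_const (y - x)).const_add x
    exact h1.comp_hasDerivAt t h2
  have hmg : Measurable (fun t : ℝ => gradient u (x + t • (y - x))) :=
    (aux_meas_grad u).comp (by fun_prop)
  have hmφ : Measurable φ' := by
    have h1 : Measurable (fun z => fderiv ℝ u z (y - x)) := measurable_fderiv_apply_const ℝ u _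
    exact h1.comp (by fun_prop : Measurable (fun t : ℝ => x + t • (y - x)))
  have hb : ∀ t, ‖φ' t‖ₑ ≤ ‖y - x‖ₑ * ‖gradient u (x + t • (y - x))‖ₑ := by
    intro t
    have : ‖gradient u (x + t • (y - x))‖ₑ = ‖fderiv ℝ u (x + t • (y - x))‖ₑ := by
      unfold gradient
      rw [← ofReal_norm, LinearIsometryEquiv.norm_map, ofReal_norm]
    rw [this, mul_comm]
    exact ContinuousLinearMap.le_opENorm _ _
  have key : ‖u x - u y‖ₑ ≤ ∫⁻ t in Icc (0:ℝ) 1, ‖φ' t‖ₑ := by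
    by_cases hfin : ∫⁻ t in Icc (0:ℝ) 1, ‖φ' t‖ₑ = ⊤
    · rw [hfin]; exact le_top
    have hint : IntegrableOn φ' (Icc 0 1) := ⟨hmφ.aestronglyMeasurable, lt_top_iff_ne_top.2 hfin⟩
    have := intervalIntegral.integral_eq_sub_of_hasDerivAt hder
      ((intervalIntegrable_iff_integrableOn_Icc_of_le zero_le_one).2 hint)
    simp only [one_smul, add_sub_cancel, zero_smul, add_zero] at this
    rw [← enorm_neg, neg_sub, ← this, intervalIntegral.integral_of_le zero_le_one,
      ← integral_Icc_eq_integral_Ioc]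
    exact enorm_integral_le_lintegral_enorm _
  calc ‖u x - u y‖ₑ ^ 2 ≤ (∫⁻ t in Icc (0:ℝ) 1, ‖φ' t‖ₑ) ^ 2 := by gcongr
    _ ≤ (∫⁻ t in Icc (0:ℝ) 1, ‖y - x‖ₑ * ‖gradient u (x + t • (y - x))‖ₑ) ^ 2 := by
        gcongr with t; exact hb t
    _ ≤ _ := by
        rw [lintegral_const_mul _ hmg.enorm, mul_pow]
        gcongr
        refine (aux_sq_lint _ _ hmg.enorm.aemeasurable).trans ?_
        simp

lemma aux_scale {n : ℕ} (G : EuclideanSpace ℝ (Fin n) → ENNReal) (hG : Measurable G)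
    {t : ℝ} (ht : 1/2 ≤ t) (a : EuclideanSpace ℝ (Fin n)) :
    ∫⁻ y, G (a + t • y) ≤ 2 ^ n * ∫⁻ y, G y := by
  have ht0 : t ≠ 0 := by linarith
  have h1 : ∫⁻ y, G (a + t • y) = ∫⁻ z, G (a + z) ∂(Measure.map (fun y => t • y) volume) := by
    rw [lintegral_map (by fun_prop) (by fun_prop)]
  have h2 := Measure.map_addHaar_smul (volume : Measure (EuclideanSpace ℝ (Fin n))) ht0
  rw [h1]
  change ∫⁻ z, G (a + z) ∂(Measure.map (t • ·) volume) ≤ _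
  rw [h2, lintegral_smul_measure, lintegral_add_left_eq_self G a, smul_eq_mul]
  gcongr
  rw [finrank_euclideanSpace_fin, abs_of_pos (by positivity), ← inv_pow]
  rw [ENNReal.ofReal_pow (by positivity)]
  gcongr
  rw [show (2:ENNReal) = ENNReal.ofReal 2 by simp]
  apply ENNReal.ofReal_le_ofReal
  rw [inv_le_comm₀ (by linarith) (by norm_num)]; linarith

lemma aux_double {n : ℕ} {u : EuclideanSpace ℝ (Fin n) → ℝ} (p : EuclideanSpace ℝ (Fin n))
    (σ : ℝ) (hu : DifferentiableOn ℝ u (ball p σ)) :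
    ∫⁻ x in ball p σ, ∫⁻ y in ball p σ, ‖u x - u y‖ₑ ^ 2 ≤
      ENNReal.ofReal (2 * σ) ^ 2 * (2 ^ n * volume (ball p σ) *
        ∫⁻ y in ball p σ, ‖gradient u y‖ₑ ^ 2) := by
  set K := ball p σ with hK
  have hKm : MeasurableSet K := measurableSet_ball
  have hconv : Convex ℝ K := convex_ball p σ
  set G : EuclideanSpace ℝ (Fin n) → ENNReal := K.indicator (fun y => ‖gradient u y‖ₑ ^ 2) with hG
  have hGm : Measurable G := ((aux_meas_grad u).enorm.pow_const 2).indicator hKm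
  have hGi : ∫⁻ y in K, ‖gradient u y‖ₑ ^ 2 = ∫⁻ y, G y := by rw [hG, lintegral_indicator hKm]
  have h1 : ∀ x ∈ K, ∀ y ∈ K, ‖u x - u y‖ₑ ^ 2 ≤ ENNReal.ofReal (2 * σ) ^ 2 *
      ∫⁻ t in Icc (0:ℝ) 1, G (x + t • (y - x)) := by
    intro x hx y hy
    refine (aux_seg hconv isOpen_ball hu hx hy).trans ?_
    refine mul_le_mul' (pow_le_pow_left' ?_ 2) ?_
    · rw [← ofReal_norm, ← dist_eq_norm]
      apply ENNReal.ofReal_le_ofReal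
      have := dist_triangle_right y x p
      have := mem_ball.1 hx
      have := mem_ball.1 hy
      linarith
    · refine setLIntegral_mono' (measurableSet_Icc : MeasurableSet (Icc (0:ℝ) 1)) fun t ht => ?_
      rw [hG, indicator_of_mem (hconv.add_smul_sub_mem hx hy ht)]
  have hm3 : Measurable (fun z : (EuclideanSpace ℝ (Fin n) × EuclideanSpace ℝ (Fin n)) × ℝ =>
      G (z.1.1 + z.2 • (z.1.2 - z.1.1))) := hGm.comp (by fun_prop)
  have hT : ∀ t ∈ Icc (0:ℝ) 1, ∫⁻ x in K, ∫⁻ y in K, G (x + t • (y - x)) ≤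
      2 ^ n * volume K * ∫⁻ y, G y := by
    intro t ht
    rcases le_total (1/2) t with h | h
    · calc ∫⁻ x in K, ∫⁻ y in K, G (x + t • (y - x)) ≤ ∫⁻ x in K, 2 ^ n * ∫⁻ y, G y := by
            gcongr with x
            calc _ ≤ ∫⁻ y, G (x + t • (y - x)) := setLIntegral_le_lintegral _ _
              _ = ∫⁻ y, G ((x - t • x) + t • y) := by
                congr with y; congr 1; rw [smul_sub]; abel
              _ ≤ _ := aux_scale G hGm h _
        _ = _ := by simp; ring
    · rw [lintegral_lintegral_swap]
      swap
      · exact (hm3.comp (by fun_prop : Measurable (fun z : EuclideanSpace ℝ (Fin n) × EuclideanSpace ℝ (Fin n) => (z, t)))).aemeasurable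
      calc ∫⁻ y in K, ∫⁻ x in K, G (x + t • (y - x)) ≤ ∫⁻ y in K, 2 ^ n * ∫⁻ y, G y := by
            gcongr with y
            calc _ ≤ ∫⁻ x, G (x + t • (y - x)) := setLIntegral_le_lintegral _ _
              _ = ∫⁻ x, G (t • y + (1 - t) • x) := by
                congr with x; congr 1; rw [smul_sub, sub_smul, one_smul]; abel
              _ ≤ _ := aux_scale G hGm (by linarith) _
        _ = _ := by simp; ring
  calc ∫⁻ x in K, ∫⁻ y in K, ‖u x - u y‖ₑ ^ 2
      ≤ ∫⁻ x in K, ∫⁻ y in K, ENNReal.ofReal (2 * σ) ^ 2 *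
          ∫⁻ t in Icc (0:ℝ) 1, G (x + t • (y - x)) :=
        setLIntegral_mono' hKm fun x hx => setLIntegral_mono' hKm fun y hy => h1 x hx y hy
    _ = ENNReal.ofReal (2 * σ) ^ 2 * ∫⁻ x in K, ∫⁻ y in K,
          ∫⁻ t in Icc (0:ℝ) 1, G (x + t • (y - x)) := by
        rw [← lintegral_const_mul' _ _ (by finiteness)]
        congr with x
        rw [← lintegral_const_mul' _ _ (by finiteness)]
    _ = ENNReal.ofReal (2 * σ) ^ 2 * ∫⁻ t in Icc (0:ℝ) 1, ∫⁻ x in K, ∫⁻ y in K,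
          G (x + t • (y - x)) := by
        congr 1
        have hsw : ∀ x, ∫⁻ y in K, ∫⁻ t in Icc (0:ℝ) 1, G (x + t • (y - x)) =
            ∫⁻ t in Icc (0:ℝ) 1, ∫⁻ y in K, G (x + t • (y - x)) := by
          intro x
          rw [lintegral_lintegral_swap]
          exact (hm3.comp (by fun_prop : Measurable (fun z : EuclideanSpace ℝ (Fin n) × ℝ => ((x, z.1), z.2)))).aemeasurable
        simp_rw [hsw]
        rw [lintegral_lintegral_swap]
        apply Measurable.aemeasurable
        apply Measurable.lintegral_prod_right'
            (f := fun z : (EuclideanSpace ℝ (Fin n) × ℝ) × EuclideanSpace ℝ (Fin n) => G (z.1.1 + z.1.2 • (z.2 - z.1.1)))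
        exact hGm.comp (by fun_prop)
    _ ≤ ENNReal.ofReal (2 * σ) ^ 2 * ∫⁻ t in Icc (0:ℝ) 1, 2 ^ n * volume K * ∫⁻ y, G y := by
        gcongr 1
        exact setLIntegral_mono' measurableSet_Icc hT
    _ = _ := by rw [hGi]; simp

lemma aux_avg {α : Type*} [MeasurableSpace α] (μ : Measure α) {A : Set α} (f : α → ℝ) (c : ℝ)
    (hf : IntegrableOn f A μ) (h0 : μ A ≠ 0) (hA : μ A ≠ ⊤) :
    ‖c - ⨍ x in A, f x ∂μ‖ₑ ^ 2 ≤ (μ A)⁻¹ * ∫⁻ x in A, ‖c - f x‖ₑ ^ 2 ∂μ := by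
  have hreal : μ.real A ≠ 0 := by simp [measureReal_def, ENNReal.toReal_eq_zero_iff, h0, hA]
  have h1 : c - ⨍ x in A, f x ∂μ = (μ.real A)⁻¹ * ∫ x in A, (c - f x) ∂μ := by
    have hc : Integrable (fun _ => c) (μ.restrict A) := integrableOn_const hA
    rw [integral_sub hc hf, setAverage_eq]
    simp [mul_sub]
    field_simp
  have h2 : ‖(μ.real A)⁻¹‖ₑ = (μ A)⁻¹ := by
    rw [enorm_inv hreal, Real.enorm_eq_ofReal measureReal_nonneg, measureReal_def, ENNReal.ofReal_toReal hA]
  rw [h1, enorm_mul, mul_pow, h2]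
  calc _ ≤ (μ A)⁻¹ ^ 2 * (∫⁻ x in A, ‖c - f x‖ₑ ∂μ) ^ 2 := by
        gcongr; exact enorm_integral_le_lintegral_enorm _
    _ ≤ (μ A)⁻¹ ^ 2 * (μ A * ∫⁻ x in A, ‖c - f x‖ₑ ^ 2 ∂μ) := by
        gcongr
        refine (aux_sq_lint (μ.restrict A) _ ?_).trans (by simp)
        exact (hf.aestronglyMeasurable.aemeasurable.const_sub c).enorm
    _ = _ := by
        rw [← mul_assoc, sq, mul_assoc (μ A)⁻¹, ENNReal.inv_mul_cancel h0 hA, mul_one]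

lemma aux_step {n : ℕ} (hn : 0 < n) {u : EuclideanSpace ℝ (Fin n) → ℝ}
    {Ω : Set (EuclideanSpace ℝ (Fin n))}
    (hu : DifferentiableOn ℝ u Ω) (hui : IntegrableOn u Ω)
    (hg : IntegrableOn (fun x => ‖gradient u x‖ ^ 2) Ω)
    {p q : EuclideanSpace ℝ (Fin n)} {ρ ρ' : ℝ} (hρ : 0 < ρ) (h1 : ρ / 2 ≤ ρ') (h2 : ρ' ≤ ρ)
    (hpq : dist p q ≤ ρ) (hb : ball p (2 * ρ) ⊆ Ω) :
    ((⨍ x in ball p ρ, u x) - ⨍ x in ball q ρ', u x) ^ 2 ≤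
      16 * 8 ^ n / volume.real (ball (0 : EuclideanSpace ℝ (Fin n)) 1) * (ρ ^ 2 / ρ ^ n) *
        ∫ x in ball p (2 * ρ), ‖gradient u x‖ ^ 2 := by
  have : Nonempty (Fin n) := ⟨⟨0, hn⟩⟩
  have hρ' : 0 < ρ' := by linarith
  set v := volume.real (ball (0 : EuclideanSpace ℝ (Fin n)) 1) with hv
  have hv0 : 0 < v := ENNReal.toReal_pos (measure_ball_pos _ _ one_pos).ne' measure_ball_lt_top.ne
  have hvol : ∀ (a : EuclideanSpace ℝ (Fin n)) (r : ℝ), 0 < r →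
      volume (ball a r) = ENNReal.ofReal (r ^ n * v) := by
    intro a r hr
    rw [Measure.addHaar_ball _ _ hr.le, finrank_euclideanSpace_fin, hv, measureReal_def,
      ENNReal.ofReal_mul (by positivity), ENNReal.ofReal_toReal measure_ball_lt_top.ne]
  set K := ball p (2 * ρ) with hK
  have hAK : ball p ρ ⊆ K := ball_subset_ball (by linarith)
  have hBK : ball q ρ' ⊆ K := ball_subset_ball' (by rw [dist_comm]; linarith)
  have hgK : IntegrableOn (fun x => ‖gradient u x‖ ^ 2) K := hg.mono_set hb
  have hI : ENNReal.ofReal (∫ x in K, ‖gradient u x‖ ^ 2) = ∫⁻ y in K, ‖gradient u y‖ₑ ^ 2 := by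
    rw [ofReal_integral_eq_lintegral_ofReal hgK (Filter.Eventually.of_forall fun x => by positivity)]
    congr with x
    rw [ENNReal.ofReal_pow (norm_nonneg _), ofReal_norm]
  have hI0 : 0 ≤ ∫ x in K, ‖gradient u x‖ ^ 2 := integral_nonneg fun x => by positivity
  have hpos : ∀ (a : EuclideanSpace ℝ (Fin n)) (r : ℝ), 0 < r → volume (ball a r) ≠ 0 :=
    fun a r hr => (measure_ball_pos _ _ hr).ne'
  have hfin : ∀ (a : EuclideanSpace ℝ (Fin n)) (r : ℝ), volume (ball a r) ≠ ⊤ :=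
    fun a r => measure_ball_lt_top.ne
  have main : ‖(⨍ x in ball p ρ, u x) - ⨍ x in ball q ρ', u x‖ₑ ^ 2 ≤
      (volume (ball p ρ))⁻¹ * ((volume (ball q ρ'))⁻¹ * (ENNReal.ofReal (2 * (2 * ρ)) ^ 2 *
        (2 ^ n * volume K * ∫⁻ y in K, ‖gradient u y‖ₑ ^ 2))) := by
    rw [← enorm_neg, neg_sub]
    refine (aux_avg volume u _ (hui.mono_set (hAK.trans hb)) (hpos _ _ hρ) (hfin _ _)).trans ?_
    gcongr
    calc ∫⁻ x in ball p ρ, ‖(⨍ x in ball q ρ', u x) - u x‖ₑ ^ 2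
        ≤ ∫⁻ x in ball p ρ, (volume (ball q ρ'))⁻¹ * ∫⁻ y in ball q ρ', ‖u x - u y‖ₑ ^ 2 := by
          gcongr with x
          rw [← enorm_neg, neg_sub]
          exact aux_avg volume u _ (hui.mono_set (hBK.trans hb)) (hpos _ _ hρ') (hfin _ _)
      _ = (volume (ball q ρ'))⁻¹ * ∫⁻ x in ball p ρ, ∫⁻ y in ball q ρ', ‖u x - u y‖ₑ ^ 2 :=
          lintegral_const_mul' _ _ (ENNReal.inv_ne_top.2 (hpos _ _ hρ'))
      _ ≤ (volume (ball q ρ'))⁻¹ * ∫⁻ x in K, ∫⁻ y in K, ‖u x - u y‖ₑ ^ 2 := by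
          gcongr
      _ ≤ _ := by
          gcongr
          exact aux_double p (2 * ρ) (hu.mono hb)
  rw [hvol _ _ hρ, hvol _ _ hρ', hK, hvol _ _ (by positivity : 0 < 2 * ρ), ← hK, ← hI] at main
  rw [← ENNReal.ofReal_inv_of_pos (by positivity), ← ENNReal.ofReal_inv_of_pos (by positivity),
    ← ENNReal.ofReal_pow (by positivity), show (2:ENNReal) ^ n = ENNReal.ofReal (2 ^ n) by
      rw [ENNReal.ofReal_pow (by norm_num)]; simp,
    ← ENNReal.ofReal_mul (by positivity), ← ENNReal.ofReal_mul (by positivity),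
    ← ENNReal.ofReal_mul (by positivity), ← ENNReal.ofReal_mul (by positivity),
    ← ENNReal.ofReal_mul (by positivity),
    ← ofReal_norm, ← ENNReal.ofReal_pow (by positivity), ENNReal.ofReal_le_ofReal_iff (by positivity),
    Real.norm_eq_abs, sq_abs] at main
  refine main.trans ?_
  have h3 : (ρ' ^ n * v)⁻¹ ≤ ((ρ / 2) ^ n * v)⁻¹ := by gcongr
  calc _ ≤ (ρ ^ n * v)⁻¹ * (((ρ / 2) ^ n * v)⁻¹ * ((2 * (2 * ρ)) ^ 2 * (2 ^ n * ((2 * ρ) ^ n * v) * ∫ x in K, ‖gradient u x‖ ^ 2))) := by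
        gcongr
    _ = _ := by
        rw [div_pow, mul_pow 2 ρ n, show (8:ℝ) ^ n = 2 ^ n * 2 ^ n * 2 ^ n by
          rw [← mul_pow, ← mul_pow]; norm_num]
        field_simp
        ring

lemma aux_chain {E : Type*} [PseudoMetricSpace E] (γ : ℝ → E) (f : E → ℝ) (δ e : ℝ) (hδ : 0 ≤ δ)
    (he : 0 ≤ e) (b : ℝ) (S : Set E)
    (hf : ∀ p ∈ S, ∀ q ∈ S, dist p q ≤ δ → |f p - f q| ≤ e) :
    ∀ (N : ℕ) (a : ℝ), a ≤ b → ContinuousOn γ (Icc a b) → (∀ t ∈ Icc a b, γ t ∈ S) →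
      eVariationOn γ (Icc a b) ≤ ENNReal.ofReal (N * δ) → |f (γ a) - f (γ b)| ≤ (N + 1) * e := by
  intro N
  induction N with
  | zero =>
    intro a hab hc hS hv
    have := (eVariationOn.edist_le γ (left_mem_Icc.2 hab) (right_mem_Icc.2 hab)).trans hv
    simp only [CharP.cast_eq_zero, zero_mul, ENNReal.ofReal_zero, nonpos_iff_eq_zero, edist_dist, ENNReal.ofReal_eq_zero] at this
    have h := hf _ (hS a (left_mem_Icc.2 hab)) _ (hS b (right_mem_Icc.2 hab)) (this.trans hδ)
    simpa using h
  | succ N ih =>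
    intro a hab hc hS hv
    by_cases hd : dist (γ a) (γ b) ≤ δ
    · have h := hf _ (hS a (left_mem_Icc.2 hab)) _ (hS b (right_mem_Icc.2 hab)) hd
      refine h.trans ?_
      push_cast
      nlinarith [Nat.cast_nonneg (α := ℝ) N]
    push Not at hd
    have hcd : ContinuousOn (fun t => dist (γ a) (γ t)) (Icc a b) := by fun_prop
    obtain ⟨t, ht, hte⟩ := intermediate_value_Icc hab hcd (show δ ∈ _ from ⟨by simpa using hδ, hd.le⟩)
    simp only at hte
    have hadd := eVariationOn.Icc_add_Icc γ (s := univ) ht.1 ht.2 (mem_univ _)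
    simp only [univ_inter] at hadd
    have h1 := eVariationOn.edist_le γ (left_mem_Icc.2 ht.1) (right_mem_Icc.2 ht.1)
    rw [edist_dist, hte] at h1
    have h2 : ENNReal.ofReal δ + eVariationOn γ (Icc t b) ≤ ENNReal.ofReal δ + ENNReal.ofReal (N * δ) := by
      rw [← ENNReal.ofReal_add hδ (by positivity)]
      calc _ ≤ eVariationOn γ (Icc a t) + eVariationOn γ (Icc t b) := by gcongr
        _ ≤ _ := by rw [hadd]; convert hv using 2; push_cast; ring
    have h3 := (ENNReal.add_le_add_iff_left (by finiteness)).1 h2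
    have hsub : Icc t b ⊆ Icc a b := Icc_subset_Icc_left ht.1
    have h4 := ih t ht.2 (hc.mono hsub) (fun s hs => hS s (hsub hs)) h3
    have h5 := hf _ (hS a (left_mem_Icc.2 hab)) _ (hS t ht) hte.le
    have := abs_sub_le (f (γ a)) (f (γ t)) (f (γ b))
    push_cast
    linarith

lemma aux_ball {n : ℕ} {Ω : Set (EuclideanSpace ℝ (Fin n))} (ho : IsOpen Ω)
    {y : EuclideanSpace ℝ (Fin n)} (hy : y ∈ closure Ω) {a : ℝ} (ha : 0 < a)
    (h : a ≤ infDist y (frontier Ω)) : ball y a ⊆ Ω := by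
  have hdis : Disjoint (ball y a) (frontier Ω) :=
    (disjoint_ball_infDist (x := y) (s := frontier Ω)).mono_left (ball_subset_ball h)
  have hfr : closure Ω ∩ ball y a ⊆ Ω := by
    rintro z ⟨hz, hzb⟩
    by_contra hzo
    exact Set.disjoint_left.1 hdis hzb (by rw [ho.frontier_eq]; exact ⟨hz, hzo⟩)
  have hyo : y ∈ Ω := hfr ⟨hy, mem_ball_self ha⟩
  exact (convex_ball y a).isPreconnected.subset_of_closure_inter_subset ho
    ⟨y, mem_ball_self ha, hyo⟩ hfr

lemma aux_point {n : ℕ} {M : ℝ} (hM : 1 < M) {Ω : Set (EuclideanSpace ℝ (Fin n))}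
    (hΩ : IsMUniform M Ω) {x : EuclideanSpace ℝ (Fin n)} (hx : x ∈ Ω)
    {r : ℝ} (hr : 0 < r) (hd : 5 * r ≤ diam Ω) :
    ∃ z ∈ Ω, dist z x = r ∧ r / M ≤ infDist z (frontier Ω) := by
  obtain ⟨ho, hc, hcurve⟩ := hΩ
  have : ∃ y ∈ Ω, 2 * r ≤ dist y x := by
    by_contra! hcon
    have : diam Ω ≤ 4 * r := by
      refine diam_le_of_forall_dist_le (by positivity) fun a ha b hb => ?_
      have := dist_triangle_right a b x
      linarith [hcon a ha, hcon b hb]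
    linarith
  obtain ⟨y, hy, hyx⟩ := this
  obtain ⟨γ, hγ, h0, h1, hcl, -, hdist⟩ := hcurve x (subset_closure hx) y (subset_closure hy)
  have hcd : ContinuousOn (fun t => dist (γ t) x) (Icc 0 1) := by fun_prop
  obtain ⟨t, ht, hte⟩ := intermediate_value_Icc zero_le_one hcd
    (show r ∈ _ from ⟨by simp [h0, hr.le], by rw [h1]; linarith⟩)
  simp only at hte
  have hinf : r / M ≤ infDist (γ t) (frontier Ω) := by
    refine le_trans ?_ (hdist t ht)
    have h2 : r ≤ dist (γ t) y := by
      have := dist_triangle_left y x (γ t)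
      linarith
    rw [hte, min_eq_left h2]
    apply le_of_eq; ring
  have hpos : 0 < r / M := by positivity
  exact ⟨γ t, aux_ball ho (hcl t ht) hpos hinf (mem_ball_self hpos), hte, hinf⟩

lemma aux_link {n : ℕ} (hn : 0 < n) {u : EuclideanSpace ℝ (Fin n) → ℝ}
    {Ω : Set (EuclideanSpace ℝ (Fin n))} {M : ℝ} (hM : 1 < M) (hΩ : IsMUniform M Ω)
    (hu : DifferentiableOn ℝ u Ω) (hui : IntegrableOn u Ω)
    (hg : IntegrableOn (fun x => ‖gradient u x‖ ^ 2) Ω)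
    {p q x : EuclideanSpace ℝ (Fin n)} {s ρ : ℝ} (hs : 0 < s) (hρ : ρ = s / (8 * M ^ 2))
    (hp : p ∈ Ω) (hq : q ∈ Ω) (hpx : dist p x ≤ s) (hpq : dist p q ≤ 5 * s)
    (hpd : s / (2 * M) ≤ infDist p (frontier Ω)) (hqd : s / (2 * M) ≤ infDist q (frontier Ω)) :
    |(⨍ y in ball p ρ, u y) - ⨍ y in ball q (ρ / 2), u y| ≤
      (⌈40 * M ^ 3⌉₊ + 2) * √(16 * 8 ^ n / volume.real (ball (0 : EuclideanSpace ℝ (Fin n)) 1) *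
        (ρ ^ 2 / ρ ^ n) * ∫ y in ball x ((2 + 5 * M) * s) ∩ Ω, ‖gradient u y‖ ^ 2) ∧
    |(⨍ y in ball p ρ, u y) - ⨍ y in ball q ρ, u y| ≤
      (⌈40 * M ^ 3⌉₊ + 2) * √(16 * 8 ^ n / volume.real (ball (0 : EuclideanSpace ℝ (Fin n)) 1) *
        (ρ ^ 2 / ρ ^ n) * ∫ y in ball x ((2 + 5 * M) * s) ∩ Ω, ‖gradient u y‖ ^ 2) := by
  obtain ⟨ho, hc, hcurve⟩ := hΩ
  set C1 := 16 * 8 ^ n / volume.real (ball (0 : EuclideanSpace ℝ (Fin n)) 1)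
  have hC1 : 0 ≤ C1 := by positivity
  have hM0 : 0 < M := by linarith
  have hρ0 : 0 < ρ := by rw [hρ]; positivity
  have h2ρ : 2 * ρ = s / (4 * M ^ 2) := by rw [hρ]; field_simp; norm_num
  have h2ρs : 2 * ρ ≤ s := by
    rw [h2ρ, div_le_iff₀ (by positivity)]; exact le_mul_of_one_le_right hs.le (by nlinarith)
  set e := √(C1 * (ρ ^ 2 / ρ ^ n) * ∫ y in ball x ((2 + 5 * M) * s) ∩ Ω, ‖gradient u y‖ ^ 2)
  -- one step
  set S : Set (EuclideanSpace ℝ (Fin n)) :=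
    {z | ball z (2 * ρ) ⊆ Ω ∧ dist z x ≤ (1 + 5 * M) * s} with hS
  have step : ∀ z ∈ S, ∀ w, ∀ ρ', ρ / 2 ≤ ρ' → ρ' ≤ ρ → dist z w ≤ ρ →
      |(⨍ y in ball z ρ, u y) - ⨍ y in ball w ρ', u y| ≤ e := by
    rintro z ⟨hz1, hz2⟩ w ρ' h1 h2 hzw
    apply Real.abs_le_sqrt
    refine (aux_step hn hu hui hg hρ0 h1 h2 hzw hz1).trans ?_
    refine mul_le_mul_of_nonneg_left ?_ (by positivity)
    refine setIntegral_mono_set (hg.mono_set inter_subset_right)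
      (Filter.Eventually.of_forall fun y => by positivity) (LE.le.eventuallyLE ?_)
    refine subset_inter (ball_subset_ball' ?_) hz1
    linarith
  obtain ⟨γ, hγ, h0, h1, hcl, hvar, hdist⟩ := hcurve p (subset_closure hp) q (subset_closure hq)
  have hinf : ∀ t ∈ Icc (0:ℝ) 1, 2 * ρ ≤ infDist (γ t) (frontier Ω) := by
    intro t ht
    have hM2 : s / (4 * M ^ 2) ≤ s / (4 * M) := by gcongr; nlinarith
    have hhalf : s / (2 * M) = s / (4 * M) + s / (4 * M) := by field_simp; norm_num
    rw [h2ρ]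
    have hnear : ∀ w, s / (2 * M) ≤ infDist w (frontier Ω) → dist (γ t) w < s / (4 * M) →
        s / (4 * M ^ 2) ≤ infDist (γ t) (frontier Ω) := by
      intro w hw hd
      have := infDist_le_infDist_add_dist (x := w) (y := γ t) (s := frontier Ω)
      rw [dist_comm] at this
      linarith
    rcases lt_or_ge (dist (γ t) p) (s / (4 * M)) with h | h
    · exact hnear p hpd h
    rcases lt_or_ge (dist (γ t) q) (s / (4 * M)) with h' | h'
    · exact hnear q hqd h'
    calc s / (4 * M ^ 2) = 1 / M * (s / (4 * M)) := by field_simp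
      _ ≤ 1 / M * min (dist (γ t) p) (dist (γ t) q) := by gcongr; exact le_min h h'
      _ ≤ _ := hdist t ht
  have hMpq : M * dist p q ≤ 5 * M * s := by nlinarith
  have hγS : ∀ t ∈ Icc (0:ℝ) 1, γ t ∈ S := by
    intro t ht
    refine ⟨aux_ball ho (hcl t ht) (by positivity) (hinf t ht), ?_⟩
    have h2 := (eVariationOn.edist_le γ ht (left_mem_Icc.2 zero_le_one)).trans hvar
    rw [edist_dist, h0, ENNReal.ofReal_le_ofReal_iff (by positivity)] at h2
    have := dist_triangle (γ t) p x
    linarith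
  have hch := aux_chain γ (fun z => ⨍ y in ball z ρ, u y) ρ e hρ0.le (Real.sqrt_nonneg _) 1 S
    (fun z hz w hw hzw => step z hz w ρ (by linarith) le_rfl hzw) ⌈40 * M ^ 3⌉₊ 0 zero_le_one
    hγ hγS (hvar.trans (ENNReal.ofReal_le_ofReal (by
      refine hMpq.trans ?_
      calc 5 * M * s = 40 * M ^ 3 * ρ := by rw [hρ]; field_simp; norm_num
        _ ≤ _ := by gcongr; exact Nat.le_ceil _)))
  simp only [h0, h1] at hch
  have hqS : q ∈ S := h1 ▸ hγS 1 (by simp)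
  have hlast := step q hqS q (ρ / 2) le_rfl (by linarith) (by simpa using hρ0.le)
  have he : 0 ≤ e := Real.sqrt_nonneg _
  refine ⟨?_, by linarith⟩
  have := abs_sub_le (⨍ y in ball p ρ, u y) (⨍ y in ball q ρ, u y) (⨍ y in ball q (ρ / 2), u y)
  linarith

lemma aux_tend {n : ℕ} {u : EuclideanSpace ℝ (Fin n) → ℝ}
    {Ω : Set (EuclideanSpace ℝ (Fin n))} (ho : IsOpen Ω)
    (hu : DifferentiableOn ℝ u Ω) (hui : IntegrableOn u Ω)
    {x : EuclideanSpace ℝ (Fin n)} (hx : x ∈ Ω) (z : ℕ → EuclideanSpace ℝ (Fin n)) (r : ℕ → ℝ)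
    (ρ : ℕ → ℝ) (hρ : ∀ k, 0 < ρ k) (hρr : ∀ k, ρ k ≤ r k) (hz : ∀ k, dist (z k) x ≤ r k)
    (hr : Filter.Tendsto r Filter.atTop (nhds 0)) :
    Filter.Tendsto (fun k => ⨍ y in ball (z k) (ρ k), u y) Filter.atTop (nhds (u x)) := by
  have hcont : ContinuousAt u x := ((hu x hx).differentiableAt (ho.mem_nhds hx)).continuousAt
  rw [Metric.tendsto_atTop]
  intro ε hε
  obtain ⟨δ, hδ, hδu⟩ := Metric.continuousAt_iff.1 hcont (ε / 2) (by positivity)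
  obtain ⟨δ', hδ', hδ'Ω⟩ := Metric.isOpen_iff.1 ho x hx
  have := (Metric.tendsto_atTop.1 hr) (min δ δ' / 2) (by positivity)
  obtain ⟨N, hN⟩ := this
  refine ⟨N, fun k hk => ?_⟩
  have h1 := hN k hk
  rw [Real.dist_eq, sub_zero] at h1
  have h2 := (abs_lt.1 h1).2
  have hsub : ball (z k) (ρ k) ⊆ ball x (min δ δ') :=
    ball_subset_ball' (by linarith [hz k, hρr k])
  have hvol0 : volume (ball (z k) (ρ k)) ≠ 0 := (measure_ball_pos _ _ (hρ k)).ne'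
  have hvolt : volume (ball (z k) (ρ k)) ≠ ⊤ := measure_ball_lt_top.ne
  have hreal : 0 < volume.real (ball (z k) (ρ k)) := ENNReal.toReal_pos hvol0 hvolt
  have hint : IntegrableOn u (ball (z k) (ρ k)) :=
    hui.mono_set ((hsub.trans (ball_subset_ball (min_le_right _ _))).trans hδ'Ω)
  have hci : Integrable (fun _ => u x) (volume.restrict (ball (z k) (ρ k))) :=
    integrableOn_const hvolt
  have heq : (⨍ y in ball (z k) (ρ k), u y) - u x =
      (volume.real (ball (z k) (ρ k)))⁻¹ * ∫ y in ball (z k) (ρ k), (u y - u x) := by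
    rw [integral_sub hint hci, setAverage_eq]
    simp [mul_sub]
    field_simp
  have hb : ‖∫ y in ball (z k) (ρ k), (u y - u x)‖ ≤ ε / 2 * volume.real (ball (z k) (ρ k)) :=
    norm_setIntegral_le_of_norm_le_const measure_ball_lt_top fun y hy => by
      rw [← dist_eq_norm]
      exact (hδu ((mem_ball.1 (hsub hy)).trans_le (min_le_left _ _))).le
  rw [Real.dist_eq, heq, abs_mul, abs_of_pos (inv_pos.2 hreal), ← Real.norm_eq_abs]
  calc _ ≤ (volume.real (ball (z k) (ρ k)))⁻¹ * (ε / 2 * volume.real (ball (z k) (ρ k))) := by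
        gcongr
    _ = ε / 2 := by field_simp
    _ < ε := by linarith

lemma aux_pointwise {n : ℕ} (hn : 0 < n) {u : EuclideanSpace ℝ (Fin n) → ℝ}
    {Ω : Set (EuclideanSpace ℝ (Fin n))} {M : ℝ} (hM : 1 < M) (hΩ : IsMUniform M Ω)
    (hu : DifferentiableOn ℝ u Ω) (hui : IntegrableOn u Ω)
    (hg : IntegrableOn (fun x => ‖gradient u x‖ ^ 2) Ω) (hbd : Bornology.IsBounded Ω)
    {r₀ κ C₂ : ℝ} (hr₀ : 0 < r₀) (hd : diam Ω = 5 * r₀) (hκ : κ = 1 / (8 * M ^ 2))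
    (hC₂ : C₂ = (⌈40 * M ^ 3⌉₊ + 2) ^ 2 *
      (16 * 8 ^ n / volume.real (ball (0 : EuclideanSpace ℝ (Fin n)) 1)) * (κ ^ 2 / κ ^ n))
    {x₀ : EuclideanSpace ℝ (Fin n)} (hx₀ : x₀ ∈ Ω) (hx₀d : r₀ / M ≤ infDist x₀ (frontier Ω))
    {x : EuclideanSpace ℝ (Fin n)} (hx : x ∈ Ω) :
    ENNReal.ofReal ((u x - ⨍ y in ball x₀ (κ * r₀), u y) ^ 2) ≤ ENNReal.ofReal (8 * r₀) *
      ∑' k : ℕ, ENNReal.ofReal (C₂ * ((r₀ * (1/2) ^ k) / (r₀ * (1/2) ^ k) ^ n)) *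
        ENNReal.ofReal (∫ y in ball x ((2 + 5 * M) * (r₀ * (1/2) ^ k)) ∩ Ω, ‖gradient u y‖ ^ 2) := by
  have hM0 : 0 < M := by linarith
  have hκ0 : 0 < κ := by rw [hκ]; positivity
  have hκ1 : κ ≤ 1 := by
    rw [hκ, div_le_one (by positivity)]; nlinarith
  set C1 := 16 * 8 ^ n / volume.real (ball (0 : EuclideanSpace ℝ (Fin n)) 1)
  have hC1 : 0 ≤ C1 := by positivity
  have hC₂0 : 0 ≤ C₂ := by rw [hC₂]; positivity
  set A : ℝ := (⌈40 * M ^ 3⌉₊ + 2 : ℝ) with hA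
  have hA0 : 0 ≤ A := by positivity
  set r : ℕ → ℝ := fun k => r₀ * (1/2) ^ k with hrdef
  have hrpos : ∀ k, 0 < r k := fun k => by positivity
  have hrle : ∀ k, r k ≤ r₀ := fun k =>
    mul_le_of_le_one_right hr₀.le (pow_le_one₀ (by norm_num) (by norm_num))
  have hrs : ∀ k, r (k + 1) = r k / 2 := fun k => by simp only [hrdef, pow_succ]; ring
  have hr0 : r 0 = r₀ := by simp [hrdef]
  have hpt := fun k => aux_point hM hΩ hx (hrpos k) (by rw [hd]; linarith [hrle k])
  choose z hzΩ hzd hzi using hpt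
  have hdiam : ∀ a ∈ Ω, ∀ b ∈ Ω, dist a b ≤ 5 * r₀ := fun a ha b hb => by
    rw [← hd]; exact dist_le_diam_of_mem hbd ha hb
  set I : ℕ → ℝ := fun k => ∫ y in ball x ((2 + 5 * M) * r k) ∩ Ω, ‖gradient u y‖ ^ 2 with hI
  have hI0 : ∀ k, 0 ≤ I k := fun k => integral_nonneg fun y => by positivity
  set e : ℕ → ℝ := fun k => A * √(C1 * ((κ * r k) ^ 2 / (κ * r k) ^ n) * I k) with he
  have he0 : ∀ k, 0 ≤ e k := fun k => by positivity
  set f : ℕ → ℝ := fun k => ⨍ y in ball (z k) (κ * r k), u y with hf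
  have hhalf : ∀ s : ℝ, s / (2 * M) = s / 2 / M := fun s => by field_simp
  have hle2 : ∀ s : ℝ, 0 < s → s / (2 * M) ≤ s / M := fun s hs => by gcongr; linarith
  have hstep : ∀ k, |f k - f (k + 1)| ≤ e k := by
    intro k
    have := (aux_link hn hM hΩ hu hui hg (p := z k) (q := z (k + 1)) (x := x) (s := r k)
      (ρ := κ * r k) (hrpos k) (by rw [hκ]; ring) (hzΩ _) (hzΩ _) (hzd k).le
      (by
        have := dist_triangle_right (z k) (z (k + 1)) x
        rw [hzd, hzd, hrs] at this
        linarith [hrpos k])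
      ((hle2 _ (hrpos k)).trans (hzi k)) (by rw [hhalf, ← hrs]; exact hzi _)).1
    have h2 : κ * r (k + 1) = κ * r k / 2 := by rw [hrs]; ring
    simp only [hf, h2]
    exact this
  have hstart : |f 0 - ⨍ y in ball x₀ (κ * r₀), u y| ≤ e 0 := by
    have := (aux_link hn hM hΩ hu hui hg (p := z 0) (q := x₀) (x := x) (s := r 0)
      (ρ := κ * r 0) (hrpos 0) (by rw [hκ]; ring) (hzΩ _) hx₀ (hzd 0).le
      (by rw [hr0]; exact hdiam _ (hzΩ _) _ hx₀)
      ((hle2 _ (hrpos 0)).trans (hzi 0)) ((hle2 _ (hrpos 0)).trans (by rwa [hr0]))).2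
    rw [hr0] at this
    simp only [hf, he, hI, hr0]
    exact this
  set a := ⨍ y in ball x₀ (κ * r₀), u y with ha
  have htel : ∀ K, |f K - a| ≤ e 0 + ∑ j ∈ Finset.range K, e j := by
    intro K
    induction K with
    | zero => simpa using hstart
    | succ K ih =>
      rw [Finset.sum_range_succ]
      have h1 := abs_sub_le (f (K + 1)) (f K) a
      have h2 := hstep K
      rw [abs_sub_comm] at h2
      linarith
  have htel2 : ∀ K, |f K - a| ≤ 2 * ∑ j ∈ Finset.range (K + 1), e j := by
    intro K
    have h1 : e 0 ≤ ∑ j ∈ Finset.range (K + 1), e j :=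
      Finset.single_le_sum (fun j _ => he0 j) (by simp)
    have h2 := htel K
    have h3 := he0 K
    rw [Finset.sum_range_succ] at h1 ⊢
    linarith
  set G : ℕ → ℝ := fun k => C₂ * (r k / r k ^ n) * I k with hG
  have hG0 : ∀ k, 0 ≤ G k := fun k => by
    have := hrpos k; have := hI0 k; positivity
  have hesq : ∀ k, e k ^ 2 = r k * G k := by
    intro k
    have := hrpos k; have := hI0 k
    simp only [he, hG]
    rw [mul_pow, Real.sq_sqrt (by positivity), hC₂, mul_pow κ, mul_pow κ]
    field_simp
  have hsq : ∀ K, (f K - a) ^ 2 ≤ 8 * r₀ * ∑ j ∈ Finset.range (K + 1), G j := by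
    intro K
    have hcs := Finset.sum_sq_le_sum_mul_sum_of_sq_le_mul (Finset.range (K + 1))
      (r := e) (f := r) (g := G) (fun i _ => (hrpos i).le) (fun i _ => hG0 i)
      (fun i _ => (hesq i).le)
    have hrsum : ∑ j ∈ Finset.range (K + 1), r j ≤ 2 * r₀ := by
      simp only [hrdef, ← Finset.mul_sum]
      have := sum_geometric_two_le (K + 1)
      nlinarith
    have hGs : 0 ≤ ∑ j ∈ Finset.range (K + 1), G j := Finset.sum_nonneg fun i _ => hG0 i
    calc (f K - a) ^ 2 = |f K - a| ^ 2 := (sq_abs _).symm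
      _ ≤ (2 * ∑ j ∈ Finset.range (K + 1), e j) ^ 2 := by gcongr; exact htel2 K
      _ = 4 * (∑ j ∈ Finset.range (K + 1), e j) ^ 2 := by ring
      _ ≤ 4 * ((2 * r₀) * ∑ j ∈ Finset.range (K + 1), G j) := by
          gcongr; exact hcs.trans (by gcongr)
      _ = _ := by ring
  have htend : Filter.Tendsto f Filter.atTop (nhds (u x)) := by
    refine aux_tend hΩ.1 hu hui hx z r (fun k => κ * r k) (fun k => by have := hrpos k; positivity)
      (fun k => mul_le_of_le_one_left (hrpos k).le hκ1) (fun k => (hzd k).le) ?_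
    have := (tendsto_pow_atTop_nhds_zero_of_lt_one (r := (1/2 : ℝ)) (by norm_num)
      (by norm_num)).const_mul r₀
    simpa [hrdef] using this
  have htend2 : Filter.Tendsto (fun K => ENNReal.ofReal ((f K - a) ^ 2)) Filter.atTop
      (nhds (ENNReal.ofReal ((u x - a) ^ 2))) :=
    ENNReal.tendsto_ofReal ((htend.sub_const a).pow 2)
  refine le_of_tendsto' htend2 fun K => ?_
  refine (ENNReal.ofReal_le_ofReal (hsq K)).trans ?_
  rw [ENNReal.ofReal_mul (by positivity), ENNReal.ofReal_sum_of_nonneg (fun i _ => hG0 i)]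
  gcongr
  refine le_trans (le_of_eq ?_) (ENNReal.sum_le_tsum (Finset.range (K + 1)))
  refine Finset.sum_congr rfl fun j _ => ?_
  have := hrpos j
  simp only [hG]
  rw [ENNReal.ofReal_mul (by positivity)]

lemma aux_schur {n : ℕ} {Ω : Set (EuclideanSpace ℝ (Fin n))} (ho : IsOpen Ω)
    (g : EuclideanSpace ℝ (Fin n) → ENNReal) (hg : Measurable g) (t : ℝ) :
    Measurable (fun x => ∫⁻ y in ball x t ∩ Ω, g y) ∧
    ∫⁻ x in Ω, ∫⁻ y in ball x t ∩ Ω, g y ≤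
      volume (ball (0 : EuclideanSpace ℝ (Fin n)) t) * ∫⁻ y in Ω, g y := by
  set S : Set (EuclideanSpace ℝ (Fin n) × EuclideanSpace ℝ (Fin n)) := {z | dist z.2 z.1 < t}
  have hS : MeasurableSet S := (isOpen_lt (by fun_prop) (by fun_prop)).measurableSet
  set F : EuclideanSpace ℝ (Fin n) × EuclideanSpace ℝ (Fin n) → ENNReal :=
    S.indicator (fun z => g z.2) with hF
  have hFm : Measurable F := (hg.comp measurable_snd).indicator hS
  have heq : ∀ x, ∫⁻ y in ball x t ∩ Ω, g y = ∫⁻ y in Ω, F (x, y) := by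
    intro x
    rw [← Measure.restrict_restrict measurableSet_ball, ← lintegral_indicator measurableSet_ball]
    rfl
  simp_rw [heq]
  refine ⟨hFm.lintegral_prod_right', ?_⟩
  rw [lintegral_lintegral_swap (f := fun x y => F (x, y)) hFm.aemeasurable, ← lintegral_const_mul _ hg]
  gcongr with y
  calc ∫⁻ x in Ω, F (x, y) ≤ ∫⁻ x, F (x, y) := setLIntegral_le_lintegral _ _
    _ = ∫⁻ x, (ball y t).indicator (fun _ => g y) x := by
        congr with x
        simp only [hF, indicator, S, mem_ofPred_eq, mem_ball, dist_comm y x]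
    _ = _ := by
        rw [lintegral_indicator measurableSet_ball, setLIntegral_const, mul_comm,
          Measure.addHaar_ball_center]

theorem uniform_poincare_MUniform (n : ℕ) (M R : ℝ) (hM : 1 < M) (hR : 0 < R) :
    ∃ C : ℝ, 0 < C ∧
      ∀ (Ω : Set (EuclideanSpace ℝ (Fin n))) (u : EuclideanSpace ℝ (Fin n) → ℝ),
        IsMUniform M Ω → Ω ⊆ Metric.ball 0 R →
        DifferentiableOn ℝ u Ω →
        IntegrableOn u Ω →
        IntegrableOn (fun x => (u x) ^ 2) Ω →
        IntegrableOn (fun x => ‖gradient u x‖ ^ 2) Ω →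
        (∫ x in Ω, u x) = 0 →
        ∫ x in Ω, (u x) ^ 2 ≤ C * ∫ x in Ω, ‖gradient u x‖ ^ 2 := by
  have hM0 : 0 < M := by linarith
  rcases Nat.eq_zero_or_pos n with hn | hn
  · subst hn
    refine ⟨1, one_pos, fun Ω u hΩ hΩR hu hui hu2 hg hmean => ?_⟩
    have hne : Ω = univ := by
      obtain ⟨w, hw⟩ := hΩ.2.1.nonempty
      ext y; simp [Subsingleton.elim y w, hw]
    have hu0 : ∀ x, u x = 0 := by
      intro x
      have h1 : ∀ y, u y = u x := fun y => by rw [Subsingleton.elim y x]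
      simp only [h1, hne, Measure.restrict_univ, integral_const, smul_eq_mul, mul_eq_zero] at hmean
      refine hmean.resolve_left ?_
      have h2 : (univ : Set (EuclideanSpace ℝ (Fin 0))) = ball 0 1 := by
        ext y; simp [Subsingleton.elim y 0]
      rw [h2]
      exact (ENNReal.toReal_pos (measure_ball_pos _ _ one_pos).ne' measure_ball_lt_top.ne).ne'
    have : 0 ≤ ∫ x in Ω, ‖gradient u x‖ ^ 2 := integral_nonneg fun y => by positivity
    simpa [hu0] using this
  have : Nonempty (Fin n) := ⟨⟨0, hn⟩⟩
  set v := volume.real (ball (0 : EuclideanSpace ℝ (Fin n)) 1) with hv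
  have hv0 : 0 < v := ENNReal.toReal_pos (measure_ball_pos _ _ one_pos).ne' measure_ball_lt_top.ne
  set κ : ℝ := 1 / (8 * M ^ 2) with hκ
  have hκ0 : 0 < κ := by positivity
  set C₂ : ℝ := (⌈40 * M ^ 3⌉₊ + 2) ^ 2 * (16 * 8 ^ n / v) * (κ ^ 2 / κ ^ n) with hC₂
  have hC₂0 : 0 < C₂ := by positivity
  set Λ : ℝ := 2 + 5 * M with hΛ
  have hΛ0 : 0 < Λ := by positivity
  refine ⟨16 * R ^ 2 * (C₂ * Λ ^ n * v), by positivity, fun Ω u hΩ hΩR hu hui hu2 hg hmean => ?_⟩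
  have ho : IsOpen Ω := hΩ.1
  have hbd : Bornology.IsBounded Ω := isBounded_ball.subset hΩR
  obtain ⟨w, hw⟩ := hΩ.2.1.nonempty
  have hdpos : 0 < diam Ω := by
    apply diam_pos _ hbd
    have : (nhdsWithin w {w}ᶜ).NeBot := Module.punctured_nhds_neBot ℝ _ w
    exact (infinite_of_mem_nhds w (ho.mem_nhds hw)).nontrivial
  set r₀ := diam Ω / 5 with hr₀d
  have hr₀ : 0 < r₀ := by positivity
  have hd : diam Ω = 5 * r₀ := by rw [hr₀d]; ring
  have hr₀R : r₀ ≤ R := by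
    have h1 : diam Ω ≤ 2 * R := (diam_mono hΩR isBounded_ball).trans (diam_ball hR.le)
    linarith
  obtain ⟨x₀, hx₀, -, hx₀d⟩ := aux_point hM hΩ hw hr₀ hd.ge
  set a := ⨍ y in ball x₀ (κ * r₀), u y with ha
  set g : EuclideanSpace ℝ (Fin n) → ENNReal := fun y => ENNReal.ofReal (‖gradient u y‖ ^ 2) with hgdef
  have hgm : Measurable g := ((aux_meas_grad u).norm.pow_const 2).ennreal_ofReal
  have hofI : ∀ T ⊆ Ω, ENNReal.ofReal (∫ y in T, ‖gradient u y‖ ^ 2) = ∫⁻ y in T, g y :=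
    fun T hT => ofReal_integral_eq_lintegral_ofReal (hg.mono_set hT)
      (Filter.Eventually.of_forall fun x => by positivity)
  set r : ℕ → ℝ := fun k => r₀ * (1/2) ^ k with hrdef
  have hrpos : ∀ k, 0 < r k := fun k => by positivity
  have hI0 : 0 ≤ ∫ x in Ω, ‖gradient u x‖ ^ 2 := integral_nonneg fun y => by positivity
  have hvolΩ : volume Ω ≠ ⊤ := hbd.measure_lt_top.ne
  have hci : Integrable (fun _ => a ^ 2) (volume.restrict Ω) := integrableOn_const hvolΩ
  have hmul : Integrable (fun x => 2 * a * u x) (volume.restrict Ω) := hui.const_mul (2 * a)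
  have hu2' : Integrable (fun x => u x ^ 2) (volume.restrict Ω) := hu2
  have hexp : (fun x => (u x - a) ^ 2) = fun x => u x ^ 2 - 2 * a * u x + a ^ 2 := by
    ext x; ring
  have hdiffint : Integrable (fun x => (u x - a) ^ 2) (volume.restrict Ω) := by
    rw [hexp]; exact (hu2'.sub hmul).add hci
  have hmeanle : ∫ x in Ω, u x ^ 2 ≤ ∫ x in Ω, (u x - a) ^ 2 := by
    have hsb : Integrable (fun x => u x ^ 2 - 2 * a * u x) (volume.restrict Ω) := hu2'.sub hmul
    rw [hexp, integral_add hsb hci, integral_sub hu2' hmul, integral_const_mul, hmean]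
    have : 0 ≤ ∫ x in Ω, a ^ 2 := integral_nonneg fun y => by positivity
    linarith
  have hmain : ENNReal.ofReal (∫ x in Ω, (u x - a) ^ 2) ≤
      ENNReal.ofReal (16 * r₀ ^ 2 * (C₂ * Λ ^ n * v) * ∫ x in Ω, ‖gradient u x‖ ^ 2) := by
    rw [ofReal_integral_eq_lintegral_ofReal hdiffint
      (Filter.Eventually.of_forall fun x => by positivity)]
    have hmeas : ∀ k, Measurable fun x => ENNReal.ofReal (C₂ * (r k / r k ^ n)) *
        ∫⁻ y in ball x (Λ * r k) ∩ Ω, g y :=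
      fun k => (aux_schur ho g hgm (Λ * r k)).1.const_mul _
    calc ∫⁻ x in Ω, ENNReal.ofReal ((u x - a) ^ 2)
        ≤ ∫⁻ x in Ω, ENNReal.ofReal (8 * r₀) * ∑' k, ENNReal.ofReal (C₂ * (r k / r k ^ n)) *
            ∫⁻ y in ball x (Λ * r k) ∩ Ω, g y := by
          refine setLIntegral_mono' ho.measurableSet fun x hx => ?_
          refine (aux_pointwise hn hM hΩ hu hui hg hbd hr₀ hd hκ hC₂ hx₀ hx₀d hx).trans ?_
          apply le_of_eq
          congr 1
          refine tsum_congr fun k => ?_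
          rw [hofI _ inter_subset_right]
      _ = ENNReal.ofReal (8 * r₀) * ∑' k, ENNReal.ofReal (C₂ * (r k / r k ^ n)) *
            ∫⁻ x in Ω, ∫⁻ y in ball x (Λ * r k) ∩ Ω, g y := by
          rw [lintegral_const_mul' _ _ (by finiteness),
            lintegral_tsum fun k => (hmeas k).aemeasurable]
          congr 1
          refine tsum_congr fun k => ?_
          rw [lintegral_const_mul' _ _ (by finiteness)]
      _ ≤ ENNReal.ofReal (8 * r₀) * ∑' k, ENNReal.ofReal (r k * (C₂ * Λ ^ n * v *
            ∫ x in Ω, ‖gradient u x‖ ^ 2)) := by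
          gcongr with k
          have hrk := hrpos k
          refine (mul_le_mul_right (aux_schur ho g hgm (Λ * r k)).2 _).trans (le_of_eq ?_)
          rw [← hofI Ω subset_rfl, Measure.addHaar_ball _ _ (by positivity),
            finrank_euclideanSpace_fin,
            ← ENNReal.ofReal_toReal (measure_ball_lt_top (μ := volume) (x := (0 : EuclideanSpace ℝ (Fin n))) (r := 1)).ne,
            ← measureReal_def, ← hv, ← ENNReal.ofReal_mul (by positivity),
            ← ENNReal.ofReal_mul (by positivity), ← ENNReal.ofReal_mul (by positivity)]
          congr 1
          rw [mul_pow Λ (r k) n]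
          field_simp
      _ ≤ ENNReal.ofReal (8 * r₀) * ENNReal.ofReal (2 * r₀ * (C₂ * Λ ^ n * v *
            ∫ x in Ω, ‖gradient u x‖ ^ 2)) := by
          gcongr
          refine ENNReal.tsum_le_of_sum_range_le fun K => ?_
          rw [← ENNReal.ofReal_sum_of_nonneg (fun k _ => by have := hrpos k; positivity),
            ← Finset.sum_mul]
          apply ENNReal.ofReal_le_ofReal
          gcongr
          simp only [hrdef, ← Finset.mul_sum]
          have := sum_geometric_two_le K
          nlinarith
      _ = _ := by
          rw [← ENNReal.ofReal_mul (by positivity)]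
          congr 1; ring
  rw [ENNReal.ofReal_le_ofReal_iff (by positivity)] at hmain
  refine (hmeanle.trans hmain).trans ?_
  gcongr
end
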